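/- The (d+1)² linear maps of W obtained by restricting A^m E*_r A^n to W, for 0 ≤ m, n ≤ d, form a basis of the ℂ-vector space End(W) of all ℂ-linear transformations from W to W; likewise the restrictions of (A*)^m E_t (A*)^n to W, for 0 ≤ m, n ≤ d, form a basis of End(W). -/

import Mathlib

open Matrix
open scoped Classical

noncomputable section

/-- The full setup: a `Q`-polynomial distance-regular graph `Γ = (X,R)` of diameter `D ≥ 3`,
with adjacency matrix `A`, primitive idempotents `E_i`, eigenvalues `θ_i`,
Krein parameters `q^h_{ij}`, a fixed base vertex `x`, dual primitive idempotents `E*_i`,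
dual adjacency matrix `A*` and dual eigenvalues `θ*_i`. -/
structure TSetup (X : Type*) [Fintype X] [DecidableEq X] where
  G : SimpleGraph X
  hGconn : G.Connected
  D : ℕ
  hD3 : 3 ≤ D
  hDiamLe : ∀ y z : X, G.dist y z ≤ D
  hDiamEq : ∃ y z : X, G.dist y z = D
  p : ℕ → ℕ → ℕ → ℕ
  hDRG : ∀ h i j : ℕ, h ≤ D → i ≤ D → j ≤ D → ∀ y z : X, G.dist y z = h →
    Nat.card {w : X // G.dist y w = i ∧ G.dist z w = j} = p h i j
  A : Matrix X X ℂ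
  hA : ∀ y z : X, A y z = if G.Adj y z then 1 else 0
  E : ℕ → Matrix X X ℂ
  hEzero : ∀ i : ℕ, D < i → E i = 0
  hEsum : ∑ i ∈ Finset.range (D + 1), E i = 1
  hEidem : ∀ i j : ℕ, i ≤ D → j ≤ D → E i * E j = if i = j then E i else 0
  hEsymm : ∀ i : ℕ, (E i)ᵀ = E i
  hEreal : ∀ i : ℕ, (E i).map (starRingEnd ℂ) = E i
  hE0 : E 0 = (Fintype.card X : ℂ)⁻¹ • Matrix.of (fun _ _ => (1 : ℂ))
  θ : ℕ → ℝ
  hθinj : ∀ i j : ℕ, i ≤ D → j ≤ D → θ i = θ j → i = j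
  hAspec : A = ∑ i ∈ Finset.range (D + 1), (θ i : ℂ) • E i
  q : ℕ → ℕ → ℕ → ℝ
  hKrein : ∀ i j : ℕ, i ≤ D → j ≤ D →
    Matrix.hadamard (E i) (E j) =
      (Fintype.card X : ℂ)⁻¹ • ∑ h ∈ Finset.range (D + 1), (q h i j : ℂ) • E h
  hQpoly0 : ∀ h i j : ℕ, h ≤ D → i ≤ D → j ≤ D →
    (i + j < h ∨ h + j < i ∨ h + i < j) → q h i j = 0
  hQpoly1 : ∀ h i j : ℕ, h ≤ D → i ≤ D → j ≤ D →
    (h = i + j ∨ i = h + j ∨ j = h + i) → q h i j ≠ 0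
  x : X
  Estar : ℕ → Matrix X X ℂ
  hEstarzero : ∀ i : ℕ, D < i → Estar i = 0
  hEstar : ∀ i : ℕ, i ≤ D → ∀ y z : X,
    Estar i y z = if y = z ∧ G.dist x y = i then 1 else 0
  Astar : Matrix X X ℂ
  hAstar : ∀ y z : X, Astar y z = if y = z then (Fintype.card X : ℂ) * E 1 x y else 0
  θstar : ℕ → ℝ
  hθstarinj : ∀ i j : ℕ, i ≤ D → j ≤ D → θstar i = θstar j → i = j
  hAstarspec : Astar = ∑ i ∈ Finset.range (D + 1), (θstar i : ℂ) • Estar i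

variable {X : Type*} [Fintype X] [DecidableEq X]

/-- The Terwilliger algebra `T = T(x)`, generated by `A` and `A*`. -/
def TSetup.T (S : TSetup X) : Subalgebra ℂ (Matrix X X ℂ) :=
  Algebra.adjoin ℂ {S.A, S.Astar}

/-- A thin irreducible `T`-module `W` with endpoint `r`, dual endpoint `t` and diameter `d`,
where `E*_i W ≠ 0` iff `r ≤ i ≤ r + d` and `E_i W ≠ 0` iff `t ≤ i ≤ t + d`. -/
structure TMod (S : TSetup X) where
  W : Submodule ℂ (X → ℂ)
  hWinv : ∀ B ∈ S.T, ∀ w ∈ W, B *ᵥ w ∈ W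
  hWne : W ≠ ⊥
  hWirr : ∀ U : Submodule ℂ (X → ℂ), U ≤ W →
    (∀ B ∈ S.T, ∀ w ∈ U, B *ᵥ w ∈ U) → U = ⊥ ∨ U = W
  hthin : ∀ i : ℕ, Module.finrank ℂ (W.map (S.Estar i).mulVecLin) ≤ 1
  r : ℕ
  t : ℕ
  d : ℕ
  hr : ∀ i : ℕ, W.map (S.Estar i).mulVecLin ≠ ⊥ ↔ r ≤ i ∧ i ≤ r + d
  ht : ∀ i : ℕ, W.map (S.E i).mulVecLin ≠ ⊥ ↔ t ≤ i ∧ i ≤ t + d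

open Classical in
/-- The action of a matrix `B` on `W` (the restriction of `B` to `W`; defined to be `0`
if `B` does not leave `W` invariant). -/
def actW (S : TSetup X) (M : TMod S) (B : Matrix X X ℂ) : M.W →ₗ[ℂ] M.W :=
  if h : ∀ w ∈ M.W, B.mulVecLin w ∈ M.W then B.mulVecLin.restrict h else 0

/-- `tr_W(B)`: the trace of the action of `B` on `W`. -/
def trW (S : TSetup X) (M : TMod S) (B : Matrix X X ℂ) : ℂ :=
  LinearMap.trace ℂ M.W (actW S M B)

/-- `a_i(W) = tr_W(E*_{r+i} A)`. -/
def aW (S : TSetup X) (M : TMod S) (i : ℕ) : ℂ :=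
  trW S M (S.Estar (M.r + i) * S.A)

/-- `x_i(W) = tr_W(E*_{r+i} A E*_{r+i-1} A)`, with `x_0(W) = 0`. -/
def xW (S : TSetup X) (M : TMod S) (i : ℕ) : ℂ :=
  if i = 0 then 0 else trW S M (S.Estar (M.r + i) * S.A * S.Estar (M.r + i - 1) * S.A)

/-- `a*_i(W) = tr_W(E_{t+i} A*)`. -/
def astarW (S : TSetup X) (M : TMod S) (i : ℕ) : ℂ :=
  trW S M (S.E (M.t + i) * S.Astar)

/-- `x*_i(W) = tr_W(E_{t+i} A* E_{t+i-1} A*)`, with `x*_0(W) = 0`. -/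
def xstarW (S : TSetup X) (M : TMod S) (i : ℕ) : ℂ :=
  if i = 0 then 0 else trW S M (S.E (M.t + i) * S.Astar * S.E (M.t + i - 1) * S.Astar)

/-- The polynomials `p_i`: `p_0 = 1`, `p_{-1} = 0`,
`λ p_i = p_{i+1} + a_i(W) p_i + x_i(W) p_{i-1}`. -/
def pW (S : TSetup X) (M : TMod S) : ℕ → Polynomial ℂ
  | 0 => 1
  | 1 => Polynomial.X - Polynomial.C (aW S M 0)
  | (n + 2) =>
      (Polynomial.X - Polynomial.C (aW S M (n + 1))) * pW S M (n + 1)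
        - Polynomial.C (xW S M (n + 1)) * pW S M n

/-- The polynomials `p*_i`: `p*_0 = 1`, `p*_{-1} = 0`,
`λ p*_i = p*_{i+1} + a*_i(W) p*_i + x*_i(W) p*_{i-1}`. -/
def pstarW (S : TSetup X) (M : TMod S) : ℕ → Polynomial ℂ
  | 0 => 1
  | 1 => Polynomial.X - Polynomial.C (astarW S M 0)
  | (n + 2) =>
      (Polynomial.X - Polynomial.C (astarW S M (n + 1))) * pstarW S M (n + 1)
        - Polynomial.C (xstarW S M (n + 1)) * pstarW S M n

/-- The Hermitian inner product `⟨u,v⟩ = Σ_y u_y conj(v_y)` on `ℂ^X`. -/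
def herm (u v : X → ℂ) : ℂ := ∑ y, u y * (starRingEnd ℂ) (v y)

/-- `ν(W)`, the multiplicative inverse of `m_0(W) = tr_W(E_t E*_r)`. -/
def nuW (S : TSetup X) (M : TMod S) : ℂ :=
  (trW S M (S.E M.t * S.Estar M.r))⁻¹

/-- `k_i(W) = ν(W) m*_i(W)` where `m*_i(W) = tr_W(E*_{r+i} E_t)`. -/
def kW (S : TSetup X) (M : TMod S) (i : ℕ) : ℂ :=
  nuW S M * trW S M (S.Estar (M.r + i) * S.E M.t)

/-- `k*_i(W) = ν(W) m_i(W)` where `m_i(W) = tr_W(E_{t+i} E*_r)`. -/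
def kstarW (S : TSetup X) (M : TMod S) (i : ℕ) : ℂ :=
  nuW S M * trW S M (S.E (M.t + i) * S.Estar M.r)

/-!
On `W` pick nonzero vectors `u_i ∈ E*_{r+i}W`. They form a basis of `W`, in which `E*_r` is the
matrix unit `e₀₀` and `A` is tridiagonal by the triangle inequality. No entry next to the diagonal
vanishes, because otherwise a proper partial sum of the spaces `E*_iW` would be a `T`-submodule.
Writing `B` for the matrix of `A`, the combination of the `B^k e₀₀ B^l` with coefficients `c_{kl}`
is `K c L`, where the columns of `K` are `e₀, B e₀, B² e₀, …` and the rows of `L` are their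
analogues for `Bᵀ`. Both are triangular with nonzero diagonal, so the products are linearly
independent, and there are `(d + 1)² = dim End(W)` of them.

The dual family is treated in the same way with `(A*, E, t)` in place of `(A, E*, r)`. There the
tridiagonality `E_i A* E_j = 0` for `|i - j| > 1` comes from `q^1_{ij} = 0`: the squared Frobenius
norm of `E_i A* E_j` is a quadratic form of `E_i ∘ E_j` evaluated at a column of `|X| E_1`.
-/

section Hessenberg

variable {R K : Type*} {n : ℕ}

/-- Upper Hessenberg matrices (no entry below the subdiagonal) that are unreduced: no entry on the
subdiagonal vanishes. An irreducible tridiagonal matrix is one that is unreduced upper Hessenberg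
together with its transpose. -/
structure IsUnreducedHessenberg [Zero R] (B : Matrix (Fin n) (Fin n) R) : Prop where
  eq_zero : ∀ i j : Fin n, (j : ℕ) + 1 < i → B i j = 0
  subdiag_ne_zero : ∀ i j : Fin n, (j : ℕ) + 1 = i → B i j ≠ 0

/-- The Krylov matrix of `B` and the first standard basis vector `e₀`: its columns are
`e₀, B e₀, B² e₀, …`. -/
def krylovMatrix [Semiring R] (B : Matrix (Fin (n + 1)) (Fin (n + 1)) R) :
    Matrix (Fin (n + 1)) (Fin (n + 1)) R :=
  of fun i k => (B ^ (k : ℕ)) i 0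

namespace IsUnreducedHessenberg

theorem pow_apply_zero_of_lt [Semiring R] {B : Matrix (Fin (n + 1)) (Fin (n + 1)) R}
    (hB : IsUnreducedHessenberg B) {k : ℕ} {i : Fin (n + 1)} (hki : k < i) :
    (B ^ k) i 0 = 0 := by
  induction k generalizing i with
  | zero => exact one_apply_ne (Fin.ne_of_gt hki)
  | succ k ih =>
    rw [pow_succ', mul_apply]
    refine Finset.sum_eq_zero fun j _ => ?_
    rcases lt_or_ge k (j : ℕ) with hkj | hjk
    · rw [ih hkj, mul_zero]
    · rw [hB.eq_zero i j (by omega), zero_mul]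

theorem pow_apply_zero_ne_zero [Semiring R] [NoZeroDivisors R] [Nontrivial R]
    {B : Matrix (Fin (n + 1)) (Fin (n + 1)) R} (hB : IsUnreducedHessenberg B) {k : ℕ}
    {i : Fin (n + 1)} (hki : k = i) : (B ^ k) i 0 ≠ 0 := by
  induction k generalizing i with
  | zero => simp [show i = 0 from Fin.ext hki.symm]
  | succ k ih =>
    have hsum : (B ^ (k + 1)) i 0 = B i ⟨k, by omega⟩ * (B ^ k) ⟨k, by omega⟩ 0 := by
      rw [pow_succ', mul_apply]
      refine Finset.sum_eq_single _ (fun j _ hj => ?_) (by simp)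
      rcases lt_or_gt_of_ne (Fin.val_ne_of_ne hj) with hjk | hkj
      · rw [hB.eq_zero i j (by grind), zero_mul]
      · rw [hB.pow_apply_zero_of_lt hkj, mul_zero]
    rw [hsum]
    exact mul_ne_zero (hB.subdiag_ne_zero _ _ hki) (ih rfl)

theorem isUnit_krylovMatrix [Field K] {B : Matrix (Fin (n + 1)) (Fin (n + 1)) K}
    (hB : IsUnreducedHessenberg B) : IsUnit (krylovMatrix B) := by
  have hupper : (krylovMatrix B).IsUpperTriangular := fun _ _ hji => hB.pow_apply_zero_of_lt hji
  rw [isUnit_iff_isUnit_det, det_of_isUpperTriangular hupper, isUnit_iff_ne_zero]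
  exact Finset.prod_ne_zero_iff.2 fun i _ => hB.pow_apply_zero_ne_zero rfl

/-- The combination of these matrices with coefficients `c` is `krylovMatrix B * c * L`, where
`L = (krylovMatrix Cᵀ)ᵀ`, and both Krylov matrices are invertible. -/
theorem linearIndependent_pow_mul_single_mul_pow [Field K]
    {B C : Matrix (Fin (n + 1)) (Fin (n + 1)) K}
    (hB : IsUnreducedHessenberg B) (hC : IsUnreducedHessenberg Cᵀ) :
    LinearIndependent K fun kl : Fin (n + 1) × Fin (n + 1) =>
      B ^ (kl.1 : ℕ) * single 0 0 1 * C ^ (kl.2 : ℕ) := by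
  rw [Fintype.linearIndependent_iff]
  intro c hc
  have hfactor : krylovMatrix B * of (fun k l => c (k, l)) * (krylovMatrix Cᵀ)ᵀ = 0 := by
    rw [← hc]
    ext i j
    simp only [krylovMatrix, mul_apply, of_apply, transpose_apply, ← transpose_pow,
      Matrix.sum_apply, Matrix.smul_apply, smul_eq_mul, single, Fintype.sum_prod_type,
      Finset.sum_mul]
    rw [Finset.sum_comm]
    refine Finset.sum_congr rfl fun k _ => Finset.sum_congr rfl fun l _ => ?_
    simp [ite_and]
    ring
  have hL : IsUnit (krylovMatrix Cᵀ)ᵀ := by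
    simpa [isUnit_iff_isUnit_det] using hC.isUnit_krylovMatrix
  have hcoeff := hB.isUnit_krylovMatrix.mul_right_eq_zero.1 (hL.mul_left_eq_zero.1 hfactor)
  exact fun kl => congrFun₂ hcoeff kl.1 kl.2

end IsUnreducedHessenberg

end Hessenberg

section OrthogonalIdempotents

variable {K R ι : Type*} [Field K] [Ring R] [Algebra K R] {e : ι → R}

theorem sum_smul_mul_sum_smul (he : OrthogonalIdempotents e) (s : Finset ι) (f g : ι → K) :
    (∑ i ∈ s, f i • e i) * ∑ i ∈ s, g i • e i = ∑ i ∈ s, (f i * g i) • e i := by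
  rw [Finset.sum_mul_sum]
  refine Finset.sum_congr rfl fun i hi => ?_
  simp [he.mul_eq, smul_smul, hi, mul_comm]

open Polynomial in
theorem aeval_sum_smul (he : OrthogonalIdempotents e) {s : Finset ι} (hs : ∑ i ∈ s, e i = 1)
    (θ : ι → K) (p : K[X]) :
    aeval (∑ i ∈ s, θ i • e i) p = ∑ i ∈ s, p.eval (θ i) • e i := by
  induction p using Polynomial.induction_on with
  | C c => simp [← Finset.smul_sum, hs, Algebra.algebraMap_eq_smul_one]
  | add p q hp hq => simp [hp, hq, add_smul, Finset.sum_add_distrib]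
  | monomial k _ hk =>
    rw [pow_succ, ← mul_assoc, map_mul, hk, aeval_X, sum_smul_mul_sum_smul he]
    simp

/-- Evaluate the `i`-th Lagrange basis polynomial at `∑ j ∈ s, θ j • e j`. -/
theorem mem_adjoin_sum_smul (he : OrthogonalIdempotents e) {s : Finset ι}
    (hs : ∑ i ∈ s, e i = 1) {θ : ι → K} (hθ : Set.InjOn θ s) {i : ι} (hi : i ∈ s) :
    e i ∈ Algebra.adjoin K {∑ j ∈ s, θ j • e j} := by
  have heval : Polynomial.aeval (∑ j ∈ s, θ j • e j) (Lagrange.basis s θ i) = e i := by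
    rw [aeval_sum_smul he hs, Finset.sum_eq_single_of_mem i hi,
      Lagrange.eval_basis_self hθ hi, one_smul]
    intro j hj hji
    rw [Lagrange.eval_basis_of_ne hji.symm hj, zero_smul]
  exact heval ▸ Polynomial.aeval_mem_adjoin_singleton K _

end OrthogonalIdempotents

section Operators

variable {K V ι : Type*} [Field K] [AddCommGroup V] [Module K V]

/-- A set of operators is jointly irreducible if only `⊥` and `⊤` are invariant under all of its
members; unlike for a simple module, `V = 0` is not excluded. -/
def IsJointlyIrreducible (s : Set (Module.End K V)) : Prop :=
  ∀ U : Submodule K V, (∀ f ∈ s, U ∈ f.invtSubmodule) → U = ⊥ ∨ U = ⊤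

theorem mem_invtSubmodule_of_mem_adjoin {s : Set (Module.End K V)} {U : Submodule K V}
    (hU : ∀ f ∈ s, U ∈ f.invtSubmodule) {f : Module.End K V} (hf : f ∈ Algebra.adjoin K s) :
    U ∈ f.invtSubmodule := by
  induction hf using Algebra.adjoin_induction with
  | mem _ hf => exact hU _ hf
  | algebraMap c => exact fun w hw => U.smul_mem c hw
  | add _ _ _ _ hf hg => exact fun w hw => U.add_mem (hf hw) (hg hw)
  | mul _ _ _ _ hf hg => exact fun w hw => hf (hg hw)

theorem IsJointlyIrreducible.of_subset_adjoin {s t : Set (Module.End K V)}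
    (hs : IsJointlyIrreducible s) (hst : s ⊆ Algebra.adjoin K t) : IsJointlyIrreducible t :=
  fun U hU => hs U fun _ hf => mem_invtSubmodule_of_mem_adjoin hU (hst hf)

theorem linearIndependent_of_apply_eq_self {e : ι → Module.End K V}
    (he : OrthogonalIdempotents e) {u : ι → V} (hu : ∀ i, u i ≠ 0) (heu : ∀ i, e i (u i) = u i) :
    LinearIndependent K u := by
  have happly (i j : ι) (hji : j ≠ i) : e i (u j) = 0 := by
    rw [← heu j, ← Module.End.mul_apply, he.ortho hji.symm, LinearMap.zero_apply]
  rw [linearIndependent_iff']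
  intro s c hc i hi
  have hei := congrArg (e i) hc
  rw [map_sum, map_zero, Finset.sum_eq_single_of_mem i hi fun j _ hji => by
    rw [map_smul, happly i j hji, smul_zero], map_smul, heu] at hei
  exact (smul_eq_zero.1 hei).resolve_right (hu i)

theorem exists_fixed_ne_zero {e : Module.End K V} (he : IsIdempotentElem e) (hne : e ≠ 0) :
    ∃ u, u ≠ 0 ∧ e u = u := by
  obtain ⟨v, hv⟩ := DFunLike.ne_iff.1 hne
  exact ⟨e v, hv, LinearMap.congr_fun he v⟩

theorem exists_basis_apply_eq_self [Fintype ι] [Nonempty ι] {e : ι → Module.End K V}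
    (he : OrthogonalIdempotents e) (hne : ∀ i, e i ≠ 0)
    (hcard : Fintype.card ι = Module.finrank K V) :
    ∃ u : Module.Basis ι K V, ∀ i, e i (u i) = u i := by
  choose u hu heu using fun i => exists_fixed_ne_zero (he.idem i) (hne i)
  exact ⟨basisOfLinearIndependentOfCardEqFinrank
    (linearIndependent_of_apply_eq_self he hu heu) hcard, by simpa using heu⟩

theorem toMatrixAlgEquiv_eq_single [Fintype ι] [DecidableEq ι] {e : ι → Module.End K V}
    (he : OrthogonalIdempotents e) {u : Module.Basis ι K V} (heu : ∀ i, e i (u i) = u i) (i : ι) :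
    LinearMap.toMatrixAlgEquiv u (e i) = single i i 1 := by
  ext j k
  rw [LinearMap.toMatrixAlgEquiv_apply, ← heu k, ← Module.End.mul_apply, he.mul_eq]
  by_cases hik : i = k
  · subst hik
    simp [heu, Finsupp.single_apply, single]
  · simp [hik, single]

theorem finrank_eq_card_of_finrank_range_eq_one [Fintype ι] {e : ι → Module.End K V}
    (he : CompleteOrthogonalIdempotents e)
    (hrank : ∀ i, Module.finrank K (LinearMap.range (e i)) = 1) :
    Module.finrank K V = Fintype.card ι := by
  have hne (i : ι) : e i ≠ 0 := by
    intro hi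
    have hi1 := hrank i
    rw [hi, LinearMap.range_zero, finrank_bot] at hi1
    exact zero_ne_one hi1
  choose u hu heu using fun i => exists_fixed_ne_zero (he.idem i) (hne i)
  have hrange (i : ι) (w : V) : ∃ c : K, c • u i = e i w := by
    obtain ⟨c, hc⟩ := exists_smul_eq_of_finrank_eq_one (hrank i)
      (x := ⟨u i, u i, heu i⟩) (by simpa [Subtype.ext_iff] using hu i) ⟨e i w, w, rfl⟩
    exact ⟨c, congrArg Subtype.val hc⟩
  have hspan : ⊤ ≤ Submodule.span K (Set.range u) := by
    intro w _
    rw [← Module.End.one_apply (R := K) w, ← he.complete, LinearMap.sum_apply]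
    refine Submodule.sum_mem _ fun i _ => ?_
    obtain ⟨c, hc⟩ := hrange i w
    exact hc ▸ Submodule.smul_mem _ c (Submodule.subset_span ⟨i, rfl⟩)
  exact Module.finrank_eq_card_basis
    (.mk (linearIndependent_of_apply_eq_self he.toOrthogonalIdempotents hu heu) hspan)

/-- Otherwise the common kernel of the `e i` with `i ∉ s` is invariant under `a` and all `e i`. -/
theorem exists_mul_mul_ne_zero [Fintype ι] [DecidableEq ι] {a : Module.End K V}
    {e : ι → Module.End K V} (he : CompleteOrthogonalIdempotents e) (hne : ∀ i, e i ≠ 0)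
    (hirr : IsJointlyIrreducible (insert a (Set.range e))) {s : Finset ι} (hs : s.Nonempty)
    (hsc : sᶜ.Nonempty) : ∃ i ∉ s, ∃ j ∈ s, e i * a * e j ≠ 0 := by
  by_contra! hzero
  let U : Submodule K V := ⨅ i ∈ sᶜ, LinearMap.ker (e i)
  have hmem (w : V) : w ∈ U ↔ ∀ i ∉ s, e i w = 0 := by simp [U, Submodule.mem_iInf]
  have hinv : ∀ f ∈ insert a (Set.range e), U ∈ f.invtSubmodule := by
    simp only [Set.forall_mem_insert, Set.forall_mem_range,
      Module.End.mem_invtSubmodule_iff_forall_mem_of_mem, hmem]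
    constructor
    · intro w hw i hi
      have hexp : e i (a w) = ∑ j, (e i * a * e j) w := by
        rw [← LinearMap.sum_apply, ← Finset.mul_sum, he.complete, mul_one, Module.End.mul_apply]
      rw [hexp]
      refine Finset.sum_eq_zero fun j _ => ?_
      by_cases hj : j ∈ s
      · rw [hzero i hi j hj, LinearMap.zero_apply]
      · rw [Module.End.mul_apply, hw j hj, map_zero]
    · intro j w hw i hi
      rw [← Module.End.mul_apply, he.mul_eq]
      split_ifs
      · exact hw i hi
      · rfl
  obtain ⟨j, hj⟩ := hs
  obtain ⟨i, hi⟩ := hsc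
  rcases hirr U hinv with hbot | htop
  · refine hne j (LinearMap.ext fun v => ?_)
    have hv : e j v ∈ U := (hmem _).2 fun k hk => by
      rw [← Module.End.mul_apply, he.ortho (ne_of_mem_of_not_mem hj hk).symm, LinearMap.zero_apply]
    simpa [hbot] using hv
  · refine hne i (LinearMap.ext fun v => ?_)
    exact (hmem v).1 (htop ▸ Submodule.mem_top) i (Finset.mem_compl.1 hi)

theorem span_range_eq_top_of_card_eq_sq_finrank [Fintype ι] [FiniteDimensional K V]
    {f : ι → Module.End K V} (hf : LinearIndependent K f)
    (hcard : Fintype.card ι = Module.finrank K V ^ 2) : Submodule.span K (Set.range f) = ⊤ :=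
  hf.span_eq_top_of_card_eq_finrank' (by rw [hcard, Module.finrank_linearMap, sq])

section Tridiagonal

variable {d : ℕ} {a : Module.End K V} {e : Fin (d + 1) → Module.End K V}

theorem mul_mul_ne_zero_of_adjacent (he : CompleteOrthogonalIdempotents e) (hne : ∀ i, e i ≠ 0)
    (hirr : IsJointlyIrreducible (insert a (Set.range e)))
    (htri : ∀ i j : Fin (d + 1), (i : ℕ) + 1 < j ∨ (j : ℕ) + 1 < i → e i * a * e j = 0)
    {i j : Fin (d + 1)} (hij : (i : ℕ) + 1 = j ∨ (j : ℕ) + 1 = i) : e i * a * e j ≠ 0 := by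
  obtain ⟨s, hs⟩ : ∃ s : Finset (Fin (d + 1)), j ∈ s ∧ i ∉ s ∧ ∀ i' ∉ s, ∀ j' ∈ s,
      ((i' : ℕ) + 1 < j' ∨ (j' : ℕ) + 1 < i') ∨ (i' = i ∧ j' = j) := by
    rcases hij with hij | hij
    · exact ⟨Finset.Ici j, by simp only [Finset.mem_Ici]; lia⟩
    · exact ⟨Finset.Iic j, by simp only [Finset.mem_Iic]; lia⟩
  obtain ⟨i', hi', j', hj', hne'⟩ :=
    exists_mul_mul_ne_zero he hne hirr ⟨j, hs.1⟩ ⟨i, by simpa using hs.2.1⟩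
  rcases hs.2.2 i' hi' j' hj' with hfar | ⟨rfl, rfl⟩
  · exact absurd (htri i' j' hfar) hne'
  · exact hne'

theorem linearIndependent_pow_mul_mul_pow (he : CompleteOrthogonalIdempotents e)
    (hne : ∀ i, e i ≠ 0) (hirr : IsJointlyIrreducible (insert a (Set.range e)))
    (htri : ∀ i j : Fin (d + 1), (i : ℕ) + 1 < j ∨ (j : ℕ) + 1 < i → e i * a * e j = 0)
    (hV : Module.finrank K V = d + 1) :
    LinearIndependent K fun kl : Fin (d + 1) × Fin (d + 1) =>
      a ^ (kl.1 : ℕ) * e 0 * a ^ (kl.2 : ℕ) := by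
  obtain ⟨u, heu⟩ := exists_basis_apply_eq_self he.toOrthogonalIdempotents hne (by simp [hV])
  let φ := LinearMap.toMatrixAlgEquiv u
  have hφe := toMatrixAlgEquiv_eq_single he.toOrthogonalIdempotents heu
  have hentry (i j : Fin (d + 1)) : φ (e i * a * e j) = single i j (φ a i j) := by
    rw [map_mul, map_mul, hφe, hφe, single_mul_mul_single, one_mul, mul_one]
  have hzero (i j : Fin (d + 1)) : φ a i j = 0 ↔ e i * a * e j = 0 := by
    rw [← map_eq_zero_iff φ φ.injective, hentry]
    exact ⟨fun h => by rw [h, single_zero], fun h => by simpa using congrFun₂ h i j⟩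
  have hadj {i j : Fin (d + 1)} (hij : (i : ℕ) + 1 = j ∨ (j : ℕ) + 1 = i) :=
    mul_mul_ne_zero_of_adjacent he hne hirr htri hij
  have hsub : IsUnreducedHessenberg (φ a) :=
    ⟨fun i j hji => (hzero i j).2 (htri i j (.inr hji)),
      fun i j hji => (hzero i j).not.2 (hadj (.inr hji))⟩
  have hsuper : IsUnreducedHessenberg (φ a)ᵀ :=
    ⟨fun i j hji => (hzero j i).2 (htri j i (.inl hji)),
      fun i j hji => (hzero j i).not.2 (hadj (.inl hji))⟩
  refine LinearIndependent.of_comp φ.toLinearMap ?_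
  simpa [Function.comp_def, φ, hφe] using hsub.linearIndependent_pow_mul_single_mul_pow hsuper

end Tridiagonal

end Operators

section TridiagonalResolution

variable {K R R' V : Type*} [Field K] [Ring R] [Algebra K R] [Ring R'] [Algebra K R']
  [AddCommGroup V] [Module K V] {D s d : ℕ}

/-- `b` is diagonalizable with primitive idempotents `e 0, …, e D`, and `a` acts on their
eigenspaces in a tridiagonal fashion. As in `TSetup`, the family is indexed by `ℕ`; the remaining
idempotents vanish by `IsTridiagonalResolution.eq_zero_of_lt`. -/
structure IsTridiagonalResolution (K : Type*) {R : Type*} [Field K] [Ring R] [Algebra K R]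
    (D : ℕ) (e : ℕ → R) (a b : R) : Prop extends OrthogonalIdempotents e where
  sum_eq_one : ∑ i ∈ Finset.range (D + 1), e i = 1
  exists_eq_sum : ∃ θ : ℕ → K, Set.InjOn θ (Finset.range (D + 1)) ∧
    b = ∑ i ∈ Finset.range (D + 1), θ i • e i
  tridiagonal : ∀ i j, i + 1 < j ∨ j + 1 < i → e i * a * e j = 0

theorem sum_range_eq_sum_fin_add {N : Type*} [AddCommMonoid N] {f : ℕ → N} (hsd : s + d ≤ D)
    (hf : ∀ i, ¬(s ≤ i ∧ i ≤ s + d) → f i = 0) :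
    ∑ i ∈ Finset.range (D + 1), f i = ∑ k : Fin (d + 1), f (s + k) := by
  rw [Fin.sum_univ_eq_sum_range (fun k => f (s + k)), ← Nat.add_sub_cancel_left s (d + 1),
    ← Finset.sum_Ico_eq_sum_range]
  refine (Finset.sum_subset (fun i hi => ?_) fun i _ hi => hf i ?_).symm <;> grind

namespace IsTridiagonalResolution

section Algebra

variable {e : ℕ → R} {a b : R}

theorem eq_zero_of_lt (h : IsTridiagonalResolution K D e a b) {i : ℕ} (hi : D < i) : e i = 0 := by
  rw [← mul_one (e i), ← h.sum_eq_one, h.mul_sum_of_notMem (by simpa using hi)]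

theorem mem_adjoin (h : IsTridiagonalResolution K D e a b) (i : ℕ) :
    e i ∈ Algebra.adjoin K {b} := by
  obtain ⟨θ, hθ, rfl⟩ := h.exists_eq_sum
  rcases lt_or_ge D i with hi | hi
  · exact h.eq_zero_of_lt hi ▸ zero_mem _
  · exact mem_adjoin_sum_smul h.toOrthogonalIdempotents h.sum_eq_one hθ
      (Finset.mem_range_succ_iff.2 hi)

theorem map (h : IsTridiagonalResolution K D e a b) (f : R →ₐ[K] R') :
    IsTridiagonalResolution K D (f ∘ e) (f a) (f b) where
  toOrthogonalIdempotents := h.toOrthogonalIdempotents.map f.toRingHom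
  sum_eq_one := by simp only [Function.comp_apply, ← map_sum, h.sum_eq_one, map_one]
  exists_eq_sum := by
    obtain ⟨θ, hθ, rfl⟩ := h.exists_eq_sum
    exact ⟨θ, hθ, by simp⟩
  tridiagonal i j hij := by
    simp only [Function.comp_apply, ← map_mul, h.tridiagonal i j hij, map_zero]

theorem of_map {f : R →ₐ[K] R'} (hf : Function.Injective f)
    (h : IsTridiagonalResolution K D (f ∘ e) (f a) (f b)) :
    IsTridiagonalResolution K D e a b where
  toOrthogonalIdempotents :=
    (OrthogonalIdempotents.map_injective_iff f.toRingHom hf).1 h.toOrthogonalIdempotents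
  sum_eq_one := hf (by simpa using h.sum_eq_one)
  exists_eq_sum := by
    obtain ⟨θ, hθ, hb⟩ := h.exists_eq_sum
    exact ⟨θ, hθ, hf (by simpa using hb)⟩
  tridiagonal i j hij := hf (by simpa using h.tridiagonal i j hij)

end Algebra

variable {e : ℕ → Module.End K V} {a b : Module.End K V}

theorem add_le (h : IsTridiagonalResolution K D e a b)
    (hs : ∀ i, e i ≠ 0 ↔ s ≤ i ∧ i ≤ s + d) : s + d ≤ D := by
  by_contra! hD
  exact (hs (s + d)).2 ⟨le_add_right le_rfl, le_rfl⟩ (h.eq_zero_of_lt hD)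

theorem completeOrthogonalIdempotents (h : IsTridiagonalResolution K D e a b)
    (hs : ∀ i, e i ≠ 0 ↔ s ≤ i ∧ i ≤ s + d) :
    CompleteOrthogonalIdempotents fun k : Fin (d + 1) => e (s + k) where
  toOrthogonalIdempotents :=
    h.embedding (Fin.valEmbedding.trans (addLeftEmbedding s))
  complete := by
    rw [← sum_range_eq_sum_fin_add (h.add_le hs) fun i => not_imp_comm.1 (hs i).1, h.sum_eq_one]

theorem isJointlyIrreducible (h : IsTridiagonalResolution K D e a b)
    (hs : ∀ i, e i ≠ 0 ↔ s ≤ i ∧ i ≤ s + d) (hirr : IsJointlyIrreducible {a, b}) :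
    IsJointlyIrreducible (insert a (Set.range fun k : Fin (d + 1) => e (s + k))) := by
  obtain ⟨θ, -, hb⟩ := h.exists_eq_sum
  refine hirr.of_subset_adjoin (Set.insert_subset ?_ (Set.singleton_subset_iff.2 ?_))
  · exact Algebra.subset_adjoin (Set.mem_insert _ _)
  · rw [hb, sum_range_eq_sum_fin_add (h.add_le hs) fun i hi => by
      rw [not_imp_comm.1 (hs i).1 hi, smul_zero]]
    exact sum_mem fun k _ => Subalgebra.smul_mem _
      (Algebra.subset_adjoin (Set.mem_insert_of_mem _ (Set.mem_range_self k))) _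

theorem finrank_eq (h : IsTridiagonalResolution K D e a b)
    (hs : ∀ i, e i ≠ 0 ↔ s ≤ i ∧ i ≤ s + d)
    (hrank : ∀ i, s ≤ i → i ≤ s + d → Module.finrank K (LinearMap.range (e i)) = 1) :
    Module.finrank K V = d + 1 :=
  (finrank_eq_card_of_finrank_range_eq_one (h.completeOrthogonalIdempotents hs)
    fun k => hrank (s + k) (by lia) (by lia)).trans (Fintype.card_fin _)

theorem linearIndependent_pow_mul_mul_pow (h : IsTridiagonalResolution K D e a b)
    (hs : ∀ i, e i ≠ 0 ↔ s ≤ i ∧ i ≤ s + d) (hirr : IsJointlyIrreducible {a, b})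
    (hV : Module.finrank K V = d + 1) :
    LinearIndependent K fun kl : Fin (d + 1) × Fin (d + 1) =>
      a ^ (kl.1 : ℕ) * e s * a ^ (kl.2 : ℕ) := by
  simpa only [Fin.val_zero, add_zero] using
    _root_.linearIndependent_pow_mul_mul_pow (h.completeOrthogonalIdempotents hs)
      (fun k => (hs (s + k)).2 (by lia)) (h.isJointlyIrreducible hs hirr)
      (fun i j hij => h.tridiagonal (s + i) (s + j) (by lia)) hV

end IsTridiagonalResolution

end TridiagonalResolution

open scoped ComplexOrder in
theorem mul_diagonal_mul_eq_zero_of_hadamard_mulVec_eq_zero {𝕜 : Type*} [RCLike 𝕜]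
    {P Q : Matrix X X 𝕜} (hP : IsStarProjection P) (hQ : IsStarProjection Q) {v : X → 𝕜}
    (hv : (P ⊙ Qᵀ) *ᵥ v = 0) : P * diagonal v * Q = 0 := by
  rw [← trace_conjTranspose_mul_self_eq_zero_iff]
  have hPself : Pᴴ = P := hP.isSelfAdjoint
  have hQself : Qᴴ = Q := hQ.isSelfAdjoint
  calc ((P * diagonal v * Q)ᴴ * (P * diagonal v * Q)).trace
      = (Q * (diagonal (star v) * (P * P) * (diagonal v * Q))).trace := by
        simp only [conjTranspose_mul, diagonal_conjTranspose, hPself, hQself, mul_assoc]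
    _ = (diagonal (star v) * (P * P) * (diagonal v * (Q * Q))).trace := by
        rw [trace_mul_comm]
        simp only [mul_assoc]
    _ = star v ᵥ* (P ⊙ Qᵀ) ⬝ᵥ v := by
        rw [hP.isIdempotentElem.eq, hQ.isIdempotentElem.eq, dotProduct_vecMul_hadamard,
          transpose_mul, diagonal_transpose, transpose_transpose]
    _ = 0 := by rw [← dotProduct_mulVec, hv, dotProduct_zero]

namespace TSetup

variable (S : TSetup X)

theorem isStarProjection_E (i : ℕ) : IsStarProjection (S.E i) where
  isIdempotentElem := by
    rcases lt_or_ge S.D i with hi | hi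
    · simp [IsIdempotentElem, S.hEzero i hi]
    · exact (S.hEidem i i hi hi).trans (if_pos rfl)
  isSelfAdjoint := by
    rw [IsSelfAdjoint, star_eq_conjTranspose, conjTranspose, S.hEsymm]
    exact S.hEreal i

theorem orthogonalIdempotents_E : OrthogonalIdempotents S.E where
  idem i := (S.isStarProjection_E i).isIdempotentElem
  ortho i j hij := by
    rcases lt_or_ge S.D i with hi | hi
    · simp [S.hEzero i hi]
    rcases lt_or_ge S.D j with hj | hj
    · simp [S.hEzero j hj]
    · simp [S.hEidem i j hi hj, hij]

theorem hadamard_E_mul_E {i j k : ℕ} (hi : i ≤ S.D) (hj : j ≤ S.D) (hk : k ≤ S.D) :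
    (S.E i ⊙ S.E j) * S.E k = ((Fintype.card X : ℂ)⁻¹ * S.q k i j) • S.E k := by
  rw [S.hKrein i j hi hj, smul_mul_assoc, Finset.sum_mul, Finset.sum_eq_single_of_mem k
    (Finset.mem_range_succ_iff.2 hk), smul_mul_assoc, S.orthogonalIdempotents_E.idem, smul_smul]
  intro h _ hhk
  rw [smul_mul_assoc, S.orthogonalIdempotents_E.ortho hhk, smul_zero]

theorem Astar_eq_diagonal :
    S.Astar = diagonal fun y => (Fintype.card X : ℂ) * S.E 1 S.x y := by
  ext y z
  rw [S.hAstar, diagonal_apply]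

theorem E_mul_Astar_mul_E {i j : ℕ} (hij : i + 1 < j ∨ j + 1 < i) :
    S.E i * S.Astar * S.E j = 0 := by
  rcases lt_or_ge S.D i with hi | hi
  · simp [S.hEzero i hi]
  rcases lt_or_ge S.D j with hj | hj
  · simp [S.hEzero j hj]
  have hD : 1 ≤ S.D := le_trans (by norm_num) S.hD3
  have hq : (S.E i ⊙ S.E j) * S.E 1 = 0 := by
    rw [S.hadamard_E_mul_E hi hj hD, S.hQpoly0 1 i j hD hi hj (by lia)]
    simp
  have hrow : (fun y => (Fintype.card X : ℂ) * S.E 1 S.x y) =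
      (Fintype.card X : ℂ) • (S.E 1).col S.x := by
    ext y
    simp [← congrFun₂ (S.hEsymm 1) S.x y]
  rw [Astar_eq_diagonal, hrow]
  refine mul_diagonal_mul_eq_zero_of_hadamard_mulVec_eq_zero (S.isStarProjection_E i)
    (S.isStarProjection_E j) ?_
  rw [S.hEsymm, mulVec_smul, ← mulVec_single_one, mulVec_mulVec, hq, zero_mulVec, smul_zero]

theorem Estar_eq_diagonal (i : ℕ) :
    S.Estar i = diagonal fun y => if S.G.dist S.x y = i then 1 else 0 := by
  ext y z
  rcases lt_or_ge S.D i with hi | hi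
  · have hne : S.G.dist S.x y ≠ i := ((S.hDiamLe S.x y).trans_lt hi).ne
    simp [S.hEstarzero i hi, diagonal_apply, hne]
  · simp [S.hEstar i hi, diagonal_apply, ite_and]

theorem orthogonalIdempotents_Estar : OrthogonalIdempotents S.Estar where
  idem i := by simp [IsIdempotentElem, Estar_eq_diagonal]
  ortho i j hij := by
    simp only [Estar_eq_diagonal, diagonal_mul_diagonal, diagonal_eq_zero]
    ext y
    simp only [Pi.zero_apply]
    grind

theorem sum_Estar : ∑ i ∈ Finset.range (S.D + 1), S.Estar i = 1 := by
  ext y z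
  have hy : S.G.dist S.x y < S.D + 1 := Nat.lt_succ_of_le (S.hDiamLe S.x y)
  simp [Matrix.sum_apply, Estar_eq_diagonal, diagonal_apply, one_apply, hy]

theorem Estar_mul_A_mul_Estar {i j : ℕ} (hij : i + 1 < j ∨ j + 1 < i) :
    S.Estar i * S.A * S.Estar j = 0 := by
  ext y z
  rw [Estar_eq_diagonal, Estar_eq_diagonal, mul_diagonal, diagonal_mul, S.hA, Matrix.zero_apply]
  by_cases hyz : S.G.Adj y z
  · have hdist := SimpleGraph.dist_eq_one_iff_adj.2 hyz
    have hxz := S.hGconn.dist_triangle (u := S.x) (v := y) (w := z)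
    have hxy := S.hGconn.dist_triangle (u := S.x) (v := z) (w := y)
    rw [SimpleGraph.dist_comm (u := z)] at hxy
    grind
  · simp [hyz]

theorem isTridiagonalResolution_E : IsTridiagonalResolution ℂ S.D S.E S.Astar S.A where
  toOrthogonalIdempotents := S.orthogonalIdempotents_E
  sum_eq_one := S.hEsum
  exists_eq_sum := ⟨fun i => S.θ i, fun i hi j hj hij => S.hθinj i j
    (Finset.mem_range_succ_iff.1 hi) (Finset.mem_range_succ_iff.1 hj)
    (Complex.ofReal_injective hij), S.hAspec⟩
  tridiagonal _ _ := S.E_mul_Astar_mul_E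

theorem isTridiagonalResolution_Estar : IsTridiagonalResolution ℂ S.D S.Estar S.A S.Astar where
  toOrthogonalIdempotents := S.orthogonalIdempotents_Estar
  sum_eq_one := S.sum_Estar
  exists_eq_sum := ⟨fun i => S.θstar i, fun i hi j hj hij => S.hθstarinj i j
    (Finset.mem_range_succ_iff.1 hi) (Finset.mem_range_succ_iff.1 hj)
    (Complex.ofReal_injective hij), S.hAstarspec⟩
  tridiagonal _ _ := S.Estar_mul_A_mul_Estar

end TSetup

namespace TMod

variable {S : TSetup X} (M : TMod S)

/-- The representation of `T` on the module `W`. -/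
def rep : S.T →ₐ[ℂ] Module.End ℂ M.W where
  toFun B := (B : Matrix X X ℂ).mulVecLin.restrict (M.hWinv B B.2)
  map_one' := by ext; simp
  map_mul' B C := LinearMap.ext fun w =>
    Subtype.ext (mulVec_mulVec (w : X → ℂ) (B : Matrix X X ℂ) C).symm
  map_zero' := by ext; simp
  map_add' B C := LinearMap.ext fun w =>
    Subtype.ext (add_mulVec (B : Matrix X X ℂ) C (w : X → ℂ))
  commutes' c := by
    ext
    simp [Algebra.algebraMap_eq_smul_one]

theorem actW_eq_rep (B : S.T) : actW S M B = M.rep B :=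
  dif_pos (M.hWinv B B.2)

theorem isJointlyIrreducible_range_rep : IsJointlyIrreducible (Set.range M.rep) := by
  intro U hU
  have hinv : ∀ B ∈ S.T, ∀ w ∈ U.map M.W.subtype, B *ᵥ w ∈ U.map M.W.subtype := by
    rintro B hB _ ⟨w, hw, rfl⟩
    exact ⟨M.rep ⟨B, hB⟩ w, hU _ (Set.mem_range_self _) hw, rfl⟩
  have hinj := Submodule.map_injective_of_injective M.W.subtype_injective
  exact (M.hWirr _ (Submodule.map_subtype_le _ _) hinv).imp
    (fun hbot => hinj (hbot.trans (Submodule.map_bot _).symm))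
    fun htop => hinj (htop.trans M.W.map_subtype_top.symm)

theorem isJointlyIrreducible_rep_pair {A B : S.T}
    (hgen : Algebra.adjoin ℂ {(A : Matrix X X ℂ), (B : Matrix X X ℂ)} = S.T) :
    IsJointlyIrreducible {M.rep A, M.rep B} := by
  have htop : Algebra.adjoin ℂ {A, B} = ⊤ := by
    refine Subalgebra.map_injective (f := S.T.val) Subtype.val_injective ?_
    rw [AlgHom.map_adjoin, Set.image_pair, Algebra.map_top, Subalgebra.range_val]
    exact hgen
  refine M.isJointlyIrreducible_range_rep.of_subset_adjoin ?_
  rw [← Set.image_pair, ← AlgHom.map_adjoin, htop]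
  simp

theorem map_mulVecLin (B : S.T) :
    M.W.map (B : Matrix X X ℂ).mulVecLin = (LinearMap.range (M.rep B)).map M.W.subtype := by
  rw [← LinearMap.range_comp, ← LinearMap.range_domRestrict]
  rfl

theorem map_mulVecLin_ne_bot_iff (B : S.T) :
    M.W.map (B : Matrix X X ℂ).mulVecLin ≠ ⊥ ↔ M.rep B ≠ 0 := by
  rw [map_mulVecLin, ← Submodule.map_bot M.W.subtype,
    (Submodule.map_injective_of_injective M.W.subtype_injective).ne_iff, Ne, LinearMap.range_eq_bot]

theorem finrank_map_mulVecLin (B : S.T) :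
    Module.finrank ℂ (M.W.map (B : Matrix X X ℂ).mulVecLin) =
      Module.finrank ℂ (LinearMap.range (M.rep B)) := by
  rw [map_mulVecLin, Submodule.finrank_map_subtype_eq]

theorem exists_isTridiagonalResolution_rep {D : ℕ} {P : ℕ → Matrix X X ℂ} {A B : S.T}
    (h : IsTridiagonalResolution ℂ D P (A : Matrix X X ℂ) B) :
    ∃ Q : ℕ → S.T, (∀ i, Q i = P i) ∧
      IsTridiagonalResolution ℂ D (M.rep ∘ Q) (M.rep A) (M.rep B) := by
  have hP (i : ℕ) : P i ∈ S.T :=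
    Algebra.adjoin_le (Set.singleton_subset_iff.2 B.2) (h.mem_adjoin i)
  have hT : IsTridiagonalResolution ℂ D (fun i => (⟨P i, hP i⟩ : S.T)) A B :=
    .of_map (f := S.T.val) Subtype.val_injective h
  exact ⟨_, fun _ => rfl, hT.map (R' := Module.End ℂ M.W) M.rep⟩

theorem finrank_W : Module.finrank ℂ M.W = M.d + 1 := by
  obtain ⟨Q, hQ, h⟩ := M.exists_isTridiagonalResolution_rep
    (A := ⟨S.A, Algebra.subset_adjoin (by simp)⟩) (B := ⟨S.Astar, Algebra.subset_adjoin (by simp)⟩)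
    S.isTridiagonalResolution_Estar
  have hs (i : ℕ) : M.rep (Q i) ≠ 0 ↔ M.r ≤ i ∧ i ≤ M.r + M.d := by
    rw [← M.map_mulVecLin_ne_bot_iff, hQ, M.hr]
  refine h.finrank_eq hs fun i hri hird => ?_
  have hne := (M.hr i).2 ⟨hri, hird⟩
  rw [Function.comp_apply, ← M.finrank_map_mulVecLin, hQ]
  exact le_antisymm (M.hthin i) (Submodule.one_le_finrank_iff.2 hne)

theorem linearIndependent_and_span_actW {D s : ℕ} {P : ℕ → Matrix X X ℂ} {A B : Matrix X X ℂ}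
    (h : IsTridiagonalResolution ℂ D P A B) (hgen : Algebra.adjoin ℂ {A, B} = S.T)
    (hs : ∀ i, M.W.map (P i).mulVecLin ≠ ⊥ ↔ s ≤ i ∧ i ≤ s + M.d) :
    LinearIndependent ℂ (fun mn : Fin (M.d + 1) × Fin (M.d + 1) =>
        actW S M (A ^ (mn.1 : ℕ) * P s * A ^ (mn.2 : ℕ))) ∧
      Submodule.span ℂ (Set.range (fun mn : Fin (M.d + 1) × Fin (M.d + 1) =>
        actW S M (A ^ (mn.1 : ℕ) * P s * A ^ (mn.2 : ℕ)))) = ⊤ := by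
  lift A to S.T using hgen ▸ Algebra.subset_adjoin (by simp)
  lift B to S.T using hgen ▸ Algebra.subset_adjoin (by simp)
  obtain ⟨Q, hQ, hrep⟩ := M.exists_isTridiagonalResolution_rep h
  have hsupp (i : ℕ) : M.rep (Q i) ≠ 0 ↔ s ≤ i ∧ i ≤ s + M.d := by
    rw [← M.map_mulVecLin_ne_bot_iff, hQ, hs]
  have hact (m n : ℕ) : actW S M ((A : Matrix X X ℂ) ^ m * P s * (A : Matrix X X ℂ) ^ n) =
      M.rep A ^ m * M.rep (Q s) * M.rep A ^ n := by
    rw [← hQ, ← map_pow, ← map_pow, ← map_mul, ← map_mul, ← actW_eq_rep]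
    rfl
  simp only [hact]
  have hli : LinearIndependent ℂ fun mn : Fin (M.d + 1) × Fin (M.d + 1) =>
      M.rep A ^ (mn.1 : ℕ) * M.rep (Q s) * M.rep A ^ (mn.2 : ℕ) :=
    hrep.linearIndependent_pow_mul_mul_pow hsupp (M.isJointlyIrreducible_rep_pair hgen) M.finrank_W
  exact ⟨hli, span_range_eq_top_of_card_eq_sq_finrank hli (by simp [M.finrank_W, sq])⟩

end TMod

/-- The restrictions of `A^m E*_r A^n` (`0 ≤ m,n ≤ d`) to `W` form a basis of `End(W)`;
likewise the restrictions of `(A*)^m E_t (A*)^n`. -/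
theorem stmt1 (S : TSetup X) (M : TMod S) (hd : 0 < M.d) :
    (LinearIndependent ℂ (fun mn : Fin (M.d + 1) × Fin (M.d + 1) =>
        actW S M (S.A ^ (mn.1 : ℕ) * S.Estar M.r * S.A ^ (mn.2 : ℕ))) ∧
      Submodule.span ℂ (Set.range (fun mn : Fin (M.d + 1) × Fin (M.d + 1) =>
        actW S M (S.A ^ (mn.1 : ℕ) * S.Estar M.r * S.A ^ (mn.2 : ℕ)))) = ⊤) ∧
    (LinearIndependent ℂ (fun mn : Fin (M.d + 1) × Fin (M.d + 1) =>
        actW S M (S.Astar ^ (mn.1 : ℕ) * S.E M.t * S.Astar ^ (mn.2 : ℕ))) ∧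
      Submodule.span ℂ (Set.range (fun mn : Fin (M.d + 1) × Fin (M.d + 1) =>
        actW S M (S.Astar ^ (mn.1 : ℕ) * S.E M.t * S.Astar ^ (mn.2 : ℕ)))) = ⊤) :=
  ⟨M.linearIndependent_and_span_actW S.isTridiagonalResolution_Estar rfl M.hr,
    M.linearIndependent_and_span_actW S.isTridiagonalResolution_E
      (by rw [Set.pair_comm]; rfl) M.ht⟩
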